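/- For an m×n matrix M over a commutative ring with m = n + 2, writing M[j] for the maximal minor obtained by deleting rows j (a set of two rows), the three-term Plücker relation holds: M[{j₁,j₂}]·M[{j₃,j₄}] − M[{j₁,j₃}]·M[{j₂,j₄}] + M[{j₁,j₄}]·M[{j₂,j₃}] = 0 for any j₁ < j₂ < j₃ < j₄. -/

import Mathlib

open Matrix

/-- The strictly monotone map `Fin n → Fin (n+2)` skipping `j₁ < j₂`;
used to delete two rows from a matrix. -/
def skipTwo {n : ℕ} (j₁ j₂ : Fin (n + 2)) (h : j₁ < j₂) : Fin n → Fin (n + 2) :=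
  fun i => j₂.succAbove
    ((j₁.castLT (lt_of_lt_of_le (Fin.lt_iff_val_lt_val.mp h)
      (Nat.lt_succ_iff.mp j₂.isLt)) : Fin (n + 1)).succAbove i)

/-!
Cramer's rule writes `det A • w` as a combination of the rows of `A`, the coefficient of row `k`
being the determinant of `A` with that row replaced by `w`. Taking for `w` a row of a second matrix
`B` and applying `det B`, as a linear function of that row, gives the exchange relation. When `A`
and `B` differ in two rows only, all but two of its terms are determinants with a repeated row.
The maximal minors of `M` are, up to sign, the determinants of `Mᵀ` bordered by two standard basis
vectors, and the three-term relation is the exchange relation for these.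
-/

section Exchange

variable {ι R : Type*} [Fintype ι] [DecidableEq ι] [CommRing R]

theorem sum_det_updateRow_smul_row (A : Matrix ι ι R) (w : ι → R) :
    ∑ k, (A.updateRow k w).det • A k = A.det • w := by
  have cramer_rule := mulVec_cramer Aᵀ w
  rw [mulVec_transpose, vecMul_eq_sum, det_transpose] at cramer_rule
  simpa only [cramer_transpose_apply] using cramer_rule

theorem sum_det_updateRow_mul_det_updateRow (A B : Matrix ι ι R) (i : ι) :
    ∑ k, (A.updateRow k (B i)).det * (B.updateRow i (A k)).det = A.det * B.det := by
  calc
    _ = ∑ k, (B.updateRow i ((A.updateRow k (B i)).det • A k)).det := by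
      simp only [det_updateRow_smul]
    _ = (B.updateRow i (∑ k, (A.updateRow k (B i)).det • A k)).det :=
      (detRowAlternating.map_update_sum Finset.univ i _ B).symm
    _ = A.det * B.det := by
      rw [sum_det_updateRow_smul_row, det_updateRow_smul, updateRow_eq_self]

theorem det_mul_det_eq_add_of_rows_eq {A B : Matrix ι ι R} {i j : ι} (hij : i ≠ j)
    (hAB : ∀ k, k ≠ i → k ≠ j → A k = B k) :
    A.det * B.det =
      (A.updateRow i (B i)).det * (B.updateRow i (A i)).det +
        (A.updateRow j (B i)).det * (B.updateRow i (A j)).det := by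
  rw [← sum_det_updateRow_mul_det_updateRow A B i]
  refine Fintype.sum_eq_add i j hij fun k ⟨hki, hkj⟩ => ?_
  rw [hAB k hki hkj, det_updateRow_eq_zero hki, mul_zero]

end Exchange

section Bordered

theorem updateRow_of_vecCons_zero {κ α : Type*} {n : ℕ} (u v : κ → α) (N : Fin n → κ → α) :
    (of (vecCons u N)).updateRow 0 v = of (vecCons v N) :=
  Fin.update_cons_zero (α := fun _ => κ → α) u N v

theorem updateRow_of_vecCons_succ {κ α : Type*} {n : ℕ} (u v : κ → α) (N : Fin n → κ → α)
    (k : Fin n) :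
    (of (vecCons u N)).updateRow k.succ v = of (vecCons u (of.symm ((of N).updateRow k v))) :=
  (Fin.cons_update (α := fun _ => κ → α) u N k v).symm

variable {R : Type*} [CommRing R] {n : ℕ}

theorem det_vecCons_mul_det_vecCons (N : Fin n → Fin (n + 2) → R) (u v w x : Fin (n + 2) → R) :
    det (of (vecCons u (vecCons v N))) * det (of (vecCons w (vecCons x N))) =
      det (of (vecCons w (vecCons v N))) * det (of (vecCons u (vecCons x N))) +
        det (of (vecCons u (vecCons w N))) * det (of (vecCons v (vecCons x N))) := by
  have rows_eq (k : Fin (n + 2)) (hk₀ : k ≠ 0) (hk₁ : k ≠ Fin.succ 0) :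
      of (vecCons u (vecCons v N)) k = of (vecCons w (vecCons x N)) k := by
    obtain ⟨k, rfl⟩ := Fin.exists_succ_eq.mpr hk₀
    obtain ⟨k, rfl⟩ := Fin.exists_succ_eq.mpr (mt (congrArg Fin.succ) hk₁)
    rfl
  have exchange := det_mul_det_eq_add_of_rows_eq (Fin.succ_ne_zero 0).symm rows_eq
  simpa only [updateRow_of_vecCons_succ, updateRow_of_vecCons_zero, of_symm_apply] using! exchange

theorem det_vecCons_single (N : Fin n → Fin (n + 1) → R) (a : Fin (n + 1)) :
    det (of (vecCons (Pi.single a 1) N)) =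
      (-1) ^ (a : ℕ) * ((of N).submatrix id a.succAbove).det := by
  rw [det_succ_row_zero, Fintype.sum_eq_single a fun j hj => by simp [hj]]
  simp only [of_apply, cons_val_zero, Pi.single_eq_same, mul_one]
  rfl

theorem det_vecCons_single_vecCons_single_succAbove (N : Fin n → Fin (n + 2) → R)
    (a : Fin (n + 1)) (b : Fin (n + 2)) :
    det (of (vecCons (Pi.single b 1) (vecCons (Pi.single (b.succAbove a) 1) N))) =
      (-1) ^ (a + b : ℕ) * ((of N).submatrix id (b.succAbove ∘ a.succAbove)).det := by
  have delete_column :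
      (of (vecCons (Pi.single (b.succAbove a) (1 : R)) N)).submatrix id b.succAbove =
        of (vecCons (Pi.single a 1) fun k => N k ∘ b.succAbove) := by
    ext k j
    cases k using Fin.cases <;> simp [Pi.single_apply]
  rw [det_vecCons_single, delete_column, det_vecCons_single, add_comm (a : ℕ), pow_add, mul_assoc]
  rfl

theorem det_submatrix_skipTwo (M : Matrix (Fin (n + 2)) (Fin n) R) {a b : Fin (n + 2)}
    (hab : a < b) :
    (M.submatrix (skipTwo a b hab) id).det =
      (-1) ^ (a + b : ℕ) * det (of (vecCons (Pi.single b 1) (vecCons (Pi.single a 1) M.col))) := by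
  let a' : Fin (n + 1) := a.castPred (Fin.ne_last_of_lt hab)
  have succAbove_a' : b.succAbove a' = a := Fin.succAbove_of_castSucc_lt b a' hab
  have det_bordered :
      det (of (vecCons (Pi.single b 1) (vecCons (Pi.single a 1) M.col))) =
        (-1) ^ (a + b : ℕ) * (M.submatrix (skipTwo a b hab) id).det := by
    rw [← det_transpose (M.submatrix _ _)]
    simpa only [succAbove_a'] using! det_vecCons_single_vecCons_single_succAbove M.col a' b
  rw [det_bordered, ← mul_assoc, ← pow_add, (Even.add_self _).neg_one_pow, one_mul]

end Bordered

/-- Three-term Plücker relation for the maximal minors `M[{a,b}]` of an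
`(n+2) × n` matrix (`M[{a,b}]` deletes rows `a` and `b`):
`M[{j₁,j₂}]M[{j₃,j₄}] - M[{j₁,j₃}]M[{j₂,j₄}] + M[{j₁,j₄}]M[{j₂,j₃}] = 0`. -/
theorem plucker_three_term
    {R : Type*} [CommRing R] (n : ℕ)
    (M : Matrix (Fin (n + 2)) (Fin n) R)
    (j₁ j₂ j₃ j₄ : Fin (n + 2))
    (h12 : j₁ < j₂) (h23 : j₂ < j₃) (h34 : j₃ < j₄) :
    (M.submatrix (skipTwo j₁ j₂ h12) id).det *
        (M.submatrix (skipTwo j₃ j₄ h34) id).det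
      - (M.submatrix (skipTwo j₁ j₃ (h12.trans h23)) id).det *
        (M.submatrix (skipTwo j₂ j₄ (h23.trans h34)) id).det
      + (M.submatrix (skipTwo j₁ j₄ ((h12.trans h23).trans h34)) id).det *
        (M.submatrix (skipTwo j₂ j₃ h23) id).det = 0 := by
  -- With the indices in this order every determinant has its basis vectors in decreasing order.
  have exchange := det_vecCons_mul_det_vecCons M.col
    (Pi.single j₄ 1) (Pi.single j₂ 1) (Pi.single j₃ 1) (Pi.single j₁ 1)
  simp only [det_submatrix_skipTwo]
  linear_combination (-(-1) ^ (j₁ + j₂ + j₃ + j₄ : ℕ)) * exchange
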